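/- The set T is closed under reflections in its elements: for all v, w ∈ T, the vector w − 2⟨w,v⟩_ℝ·v (the reflection of w in the hyperplane orthogonal to the unit vector v) again belongs to T. -/

import Mathlib

noncomputable section
open Real Complex

namespace Triacontagonal

/-- The golden ratio. -/
def τ : ℝ := (1 + Real.sqrt 5) / 2

/-- The constant 3^(-1/2) * 5^(-1/4). -/
def k0 : ℝ := (3 : ℝ) ^ (-(1:ℝ)/2) * (5 : ℝ) ^ (-(1:ℝ)/4)

/-- `a` is the positive real with 2a² = 1 + 3^(-1/2)·5^(-1/4)·τ^(3/2). -/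
def a : ℝ := Real.sqrt ((1 + k0 * τ ^ ((3:ℝ)/2)) / 2)

/-- `b` is the positive real with 2b² = 1 + 3^(-1/2)·5^(-1/4)·τ^(-3/2). -/
def b : ℝ := Real.sqrt ((1 + k0 * τ ^ (-((3:ℝ)/2))) / 2)

/-- `c` is the positive real with 2c² = 1 - 3^(-1/2)·5^(-1/4)·τ^(-3/2). -/
def c : ℝ := Real.sqrt ((1 - k0 * τ ^ (-((3:ℝ)/2))) / 2)

/-- `d` is the positive real with 2d² = 1 - 3^(-1/2)·5^(-1/4)·τ^(3/2). -/
def d : ℝ := Real.sqrt ((1 - k0 * τ ^ ((3:ℝ)/2)) / 2)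

/-- `ω = exp(iπ/30)`, a primitive 60th root of unity. -/
def ω : ℂ := Complex.exp (Real.pi * Complex.I / 30)

/-- The four cycles of 30 vectors each in ℂ², the H₄ root system. -/
def A (n : Fin 30) : Fin 2 → ℂ :=
  ![(a : ℂ) * ω ^ (2 * (n : ℕ)), (d : ℂ) * ω ^ (22 * (n : ℕ))]

def B (n : Fin 30) : Fin 2 → ℂ :=
  ![(b : ℂ) * ω ^ (2 * (n : ℕ) + 1), (c : ℂ) * ω ^ (22 * (n : ℕ) + 11)]

def C (n : Fin 30) : Fin 2 → ℂ :=
  ![(c : ℂ) * ω ^ (2 * (n : ℕ) + 1), -((b : ℂ) * ω ^ (22 * (n : ℕ) + 11))]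

def D (n : Fin 30) : Fin 2 → ℂ :=
  ![(d : ℂ) * ω ^ (2 * (n : ℕ)), -((a : ℂ) * ω ^ (22 * (n : ℕ)))]

/-- The set of the 120 vectors. -/
def T : Set (Fin 2 → ℂ) :=
  {v | ∃ n : Fin 30, v = A n ∨ v = B n ∨ v = C n ∨ v = D n}

/-- The real inner product on ℂ²: ⟨v,w⟩_ℝ = Re(Σᵢ vᵢ · conj(wᵢ)). -/
def rinner (v w : Fin 2 → ℂ) : ℝ := (∑ i, v i * star (w i)).re

/-- The associated Euclidean norm. -/
def enorm (v : Fin 2 → ℂ) : ℝ := Real.sqrt (rinner v v)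

lemma w_pow (n : ℕ) : ω ^ n = Complex.exp (((n * (π / 30) : ℝ) : ℂ) * Complex.I) := by
  rw [ω, ← Complex.exp_nat_mul]; congr 1; push_cast; ring

lemma w30 : ω ^ 30 = -1 := by
  rw [w_pow, ← Complex.exp_pi_mul_I]; congr 2; push_cast; ring

lemma w_ne : ω ≠ 0 := Complex.exp_ne_zero _

lemma w_re (n : ℕ) : (ω ^ n).re = Real.cos (n * (π / 30)) := by
  rw [w_pow, Complex.exp_ofReal_mul_I_re]

lemma w_star (n : ℕ) (hn : n ≤ 60) : star (ω ^ n) = ω ^ (60 - n) := by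
  have h60 : ω ^ 60 = 1 := by
    have : ω ^ 60 = (ω ^ 30) ^ 2 := by ring
    rw [this, w30]; norm_num
  have h1 : ω ^ n * ω ^ (60 - n) = 1 := by rw [← pow_add, Nat.add_sub_cancel' hn, h60]
  have h2 : ω ^ n * star (ω ^ n) = 1 := by
    rw [Complex.star_def, Complex.mul_conj, w_pow, Complex.normSq_eq_norm_sq,
      Complex.norm_exp_ofReal_mul_I]; simp
  exact mul_left_cancel₀ (pow_ne_zero n w_ne) (h2.trans h1.symm)

lemma w_cos (n : ℕ) (hn : n ≤ 60) :
    ((2 * Real.cos (n * (π / 30)) : ℝ) : ℂ) = ω ^ n + ω ^ (60 - n) := by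
  rw [← w_star n hn, Complex.star_def, Complex.add_conj, w_re]

lemma phi : ω^16+ω^14-ω^10-ω^8-ω^6+ω^2+1 = 0 := by
  have hne : ω^4 - ω^2 + 1 ≠ 0 := by
    intro h
    have h12 : ω ^ 12 = 1 := by linear_combination (ω^8 + ω^6 - ω^2 - 1) * h
    have h2 := congrArg Complex.re h12
    rw [w_re] at h2
    have : Real.cos (((12:ℕ):ℝ) * (π/30)) < Real.cos 0 := by
      apply Real.cos_lt_cos_of_nonneg_of_le_pi <;> push_cast <;> linarith [Real.pi_pos]
    rw [h2, Real.cos_zero] at this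
    simp at this
  have h10 : ω^20 - ω^10 + 1 = 0 := by
    have hh : ω ^ 10 + ω ^ 50 = 1 := by
      rw [← w_cos 10 (by norm_num)]
      have : ((10:ℕ):ℝ) * (π/30) = π/3 := by push_cast; ring
      rw [this, Real.cos_pi_div_three]; norm_num
    linear_combination (-1:ℂ) * hh + ω^20 * w30
  apply mul_left_cancel₀ hne
  linear_combination h10

lemma tau_w : (τ : ℂ) = ω^6 - ω^24 := by
  have h := w_cos 6 (by norm_num)
  have : ((6:ℕ):ℝ) * (π/30) = π/5 := by push_cast; ring
  rw [this, Real.cos_pi_div_five] at h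
  have e : (τ : ℝ) = 2 * ((1 + √5) / 4) := by rw [τ]; ring
  rw [e, h]
  linear_combination ω^24 * w30

lemma tau_sq : τ ^ 2 = τ + 1 := by
  have := Real.sq_sqrt (show (0:ℝ) ≤ 5 by norm_num)
  rw [τ]; linear_combination this / 4

lemma tau_gt : 1 < τ := by
  have := Real.lt_sqrt (x := 1) (y := 5) (by norm_num)
  rw [τ]; linarith [this.2 (by norm_num)]

lemma tau_lt : τ < 2 := by nlinarith [tau_sq, tau_gt]

lemma sqrt5 : √5 = 2 * τ - 1 := by rw [τ]; ring

def sg : ℝ := 2 * (2 * Real.cos (((2:ℕ):ℝ) * (π/30))) + 1 - τ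

lemma sg_w : (sg : ℂ) = 2 * (ω^2 - ω^28) + 1 - (ω^6 - ω^24) := by
  have h := w_cos 2 (by norm_num)
  rw [sg, Complex.ofReal_sub, Complex.ofReal_add, Complex.ofReal_mul, h, tau_w]
  push_cast
  linear_combination 2 * ω^28 * w30

lemma sg_pos : 0 < sg := by
  have : Real.cos (π/3) ≤ Real.cos (((2:ℕ):ℝ) * (π/30)) := by
    apply Real.cos_le_cos_of_nonneg_of_le_pi <;> push_cast <;> linarith [Real.pi_pos]
  rw [Real.cos_pi_div_three] at this
  rw [sg]; linarith [tau_lt]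

lemma sg_sq : sg ^ 2 = 3 * (τ + 2) := by
  have : ((sg ^ 2 : ℝ) : ℂ) = ((3 * (τ + 2) : ℝ) : ℂ) := by
    push_cast
    rw [sg_w, tau_w]
    have := phi
    grind
  exact_mod_cast this

lemma kap : k0 * τ ^ ((3:ℝ)/2) = (τ + 2) * sg / 15 := by
  have ht := tau_gt
  have h0 : (0:ℝ) ≤ k0 * τ ^ ((3:ℝ)/2) := by unfold k0; positivity
  have h1 : (0:ℝ) ≤ (τ + 2) * sg / 15 := by have := sg_pos; positivity
  rw [← sq_eq_sq₀ h0 h1]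
  have e1 : ((3 : ℝ) ^ (-(1:ℝ)/2)) ^ 2 = 3⁻¹ := by
    rw [← Real.rpow_natCast, ← Real.rpow_mul (by norm_num), ← Real.rpow_neg_one]; norm_num
  have e2 : ((5 : ℝ) ^ (-(1:ℝ)/4)) ^ 2 = (√5)⁻¹ := by
    rw [← Real.rpow_natCast, ← Real.rpow_mul (by norm_num), Real.sqrt_eq_rpow,
      ← Real.rpow_neg (by norm_num)]; norm_num
  have e3 : (τ ^ ((3:ℝ)/2)) ^ 2 = τ ^ 3 := by
    rw [← Real.rpow_natCast, ← Real.rpow_mul (by linarith), ← Real.rpow_natCast]; norm_num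
  rw [k0, mul_pow, mul_pow, e1, e2, e3, div_pow, mul_pow, sg_sq, sqrt5]
  have : 2 * τ - 1 ≠ 0 := by linarith
  field_simp
  have := tau_sq
  grind

lemma kap' : k0 * τ ^ (-((3:ℝ)/2)) = (τ - 1)^3 * ((τ + 2) * sg / 15) := by
  have ht := tau_gt
  rw [← kap]
  have : τ ^ (-((3:ℝ)/2)) = τ ^ (-3 : ℝ) * τ ^ ((3:ℝ)/2) := by
    rw [← Real.rpow_add (by linarith)]; norm_num
  have i : τ ^ (-3 : ℝ) = (τ-1)^3 := by
    rw [Real.rpow_neg (by linarith), inv_eq_iff_eq_inv, ← inv_pow]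
    have : (τ - 1)⁻¹ = τ := by
      exact inv_eq_of_mul_eq_one_right (by linarith [tau_sq])
    rw [this]; norm_cast
  rw [this, i]; ring

lemma kap_le : (τ + 2) * sg / 15 < 1 := by
  have h1 : (0:ℝ) ≤ (τ + 2) * sg / 15 := by have := sg_pos; have := tau_gt; positivity
  have : ((τ + 2) * sg / 15)^2 < 1 := by
    rw [div_pow, mul_pow, sg_sq]; nlinarith [tau_sq, tau_lt, tau_gt]
  nlinarith

lemma kap_nn : 0 ≤ (τ + 2) * sg / 15 := by have := sg_pos; have := tau_gt; positivity

lemma kap'_le : (τ - 1)^3 * ((τ + 2) * sg / 15) ≤ 1 := by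
  have h := pow_le_one₀ (n := 3) (by linarith [tau_gt] : 0 ≤ τ - 1) (by linarith [tau_lt])
  nlinarith [kap_le, kap_nn]

lemma kap'_nn : 0 ≤ (τ - 1)^3 * ((τ + 2) * sg / 15) :=
  mul_nonneg (pow_nonneg (by linarith [tau_gt]) _) kap_nn

lemma a_sq : a ^ 2 = (1 + (τ + 2) * sg / 15) / 2 := by
  rw [a, kap, Real.sq_sqrt]; linarith [kap_nn]
lemma d_sq : d ^ 2 = (1 - (τ + 2) * sg / 15) / 2 := by
  rw [d, kap, Real.sq_sqrt]; linarith [kap_le]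
lemma b_sq : b ^ 2 = (1 + (τ - 1)^3 * ((τ + 2) * sg / 15)) / 2 := by
  rw [b, kap', Real.sq_sqrt]; linarith [kap'_nn]
lemma c_sq : c ^ 2 = (1 - (τ - 1)^3 * ((τ + 2) * sg / 15)) / 2 := by
  rw [c, kap', Real.sq_sqrt]; linarith [kap'_le]

lemma a_nn : 0 ≤ a := Real.sqrt_nonneg _
lemma b_nn : 0 ≤ b := Real.sqrt_nonneg _
lemma c_nn : 0 ≤ c := Real.sqrt_nonneg _
lemma d_nn : 0 ≤ d := Real.sqrt_nonneg _

lemma aC : (a:ℂ)^2 = (1 + (τ + 2) * sg / 15) / 2 := by exact_mod_cast congrArg ((↑) : ℝ → ℂ) a_sq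
lemma bC : (b:ℂ)^2 = (1 + (τ - 1)^3 * ((τ + 2) * sg / 15)) / 2 := by exact_mod_cast congrArg ((↑) : ℝ → ℂ) b_sq
lemma cC : (c:ℂ)^2 = (1 - (τ - 1)^3 * ((τ + 2) * sg / 15)) / 2 := by exact_mod_cast congrArg ((↑) : ℝ → ℂ) c_sq
lemma dC : (d:ℂ)^2 = (1 - (τ + 2) * sg / 15) / 2 := by exact_mod_cast congrArg ((↑) : ℝ → ℂ) d_sq

lemma root_eq (p q : ℝ) (z : ℂ) (hp : 0 ≤ p) (hq : 0 ≤ q) (hz : 0 ≤ z.re)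
    (h : (p:ℂ)^2 = (q * z)^2) : (p:ℂ) = q * z := by
  rcases sq_eq_sq_iff_eq_or_eq_neg.1 h with h | h
  · exact h
  · have h3 := congrArg Complex.re h
    simp at h3
    have : p = 0 := le_antisymm (by rw [h3]; nlinarith) hp
    subst this
    have : (q:ℂ) * z = 0 := by simpa [eq_comm] using h
    rw [this]; simp

lemma c_eq : (c:ℂ) = d * (ω - ω^29) := by
  apply root_eq _ _ _ c_nn d_nn
  · have h := w_re 1
    have h2 := w_re 29
    have h3 : 0 ≤ Real.cos (((1:ℕ):ℝ) * (π/30)) := by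
      apply Real.cos_nonneg_of_neg_pi_div_two_le_of_le <;> push_cast <;> linarith [Real.pi_pos]
    have h4 : Real.cos (((29:ℕ):ℝ) * (π/30)) ≤ 0 := by
      apply Real.cos_nonpos_of_pi_div_two_le_of_le <;> push_cast <;> linarith [Real.pi_pos]
    rw [pow_one] at h
    rw [Complex.sub_re, h, h2]; linarith
  · rw [mul_pow, cC, dC, sg_w, tau_w]
    have := phi
    grind

lemma b_eq : (b:ℂ) = a * (ω^11 - ω^19) := by
  apply root_eq _ _ _ b_nn a_nn
  · have h3 : 0 ≤ Real.cos (((11:ℕ):ℝ) * (π/30)) := by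
      apply Real.cos_nonneg_of_neg_pi_div_two_le_of_le <;> push_cast <;> linarith [Real.pi_pos]
    have h4 : Real.cos (((19:ℕ):ℝ) * (π/30)) ≤ 0 := by
      apply Real.cos_nonpos_of_pi_div_two_le_of_le <;> push_cast <;> linarith [Real.pi_pos]
    rw [Complex.sub_re, w_re, w_re]; linarith
  · rw [mul_pow, aC, bC, sg_w, tau_w]
    have := phi
    grind

lemma a_eq : (a:ℂ) = d * (τ + τ * ω^2 + (τ - 1) * ω^4 - ω^6) := by
  apply root_eq _ _ _ a_nn d_nn
  · have h2 : 0 ≤ Real.cos (((2:ℕ):ℝ) * (π/30)) := by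
      apply Real.cos_nonneg_of_neg_pi_div_two_le_of_le <;> push_cast <;> linarith [Real.pi_pos]
    have h4 : 0 ≤ Real.cos (((4:ℕ):ℝ) * (π/30)) := by
      apply Real.cos_nonneg_of_neg_pi_div_two_le_of_le <;> push_cast <;> linarith [Real.pi_pos]
    have h6 := Real.cos_le_one (((6:ℕ):ℝ) * (π/30))
    have e : (τ + τ * ω^2 + (τ - 1) * ω^4 - ω^6 : ℂ) =
      (τ : ℂ) + (τ : ℂ) * ω^2 + ((τ - 1 : ℝ) : ℂ) * ω^4 - ω^6 := by push_cast; ring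
    rw [e, Complex.sub_re, Complex.add_re, Complex.add_re, Complex.re_ofReal_mul,
      Complex.re_ofReal_mul, Complex.ofReal_re, w_re, w_re, w_re]
    have := tau_gt
    have := mul_nonneg (by linarith : 0 ≤ τ) h2
    have := mul_nonneg (by linarith : 0 ≤ τ - 1) h4
    linarith
  · rw [mul_pow, aC, dC, sg_w, tau_w]
    have := phi
    grind

abbrev Z2 := ℤ × ℤ
abbrev V4 := Z2 × Z2 × Z2 × Z2

def ev (x : Z2) : ℝ := (x.1 : ℝ) + (x.2 : ℝ) * τ
def zadd (x y : Z2) : Z2 := (x.1 + y.1, x.2 + y.2)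
def zsub (x y : Z2) : Z2 := (x.1 - y.1, x.2 - y.2)
def zmul (x y : Z2) : Z2 := (x.1 * y.1 + x.2 * y.2, x.1 * y.2 + x.2 * y.1 + x.2 * y.2)

lemma ev_add (x y) : ev (zadd x y) = ev x + ev y := by simp [ev, zadd]; ring
lemma ev_sub (x y) : ev (zsub x y) = ev x - ev y := by simp [ev, zsub]; ring
lemma ev_mul (x y) : ev (zmul x y) = ev x * ev y := by
  simp [ev, zmul]; linear_combination (-(x.2 * y.2 : ℝ)) * tau_sq

def Rot (v : Fin 2 → ℂ) : Fin 2 → ℂ := ![ω^2 * v 0, ω^22 * v 1]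

def bas (n : ℕ) : Fin 2 → ℂ := ![(d : ℂ) * ω ^ (2 * n), -((a : ℂ) * ω ^ (22 * n))]

def evl (p : V4) : Fin 2 → ℂ :=
  ev p.1 • bas 0 + ev p.2.1 • bas 1 + ev p.2.2.1 • bas 2 + ev p.2.2.2 • bas 3

def step (p : V4) : V4 :=
  (zsub (0, 0) p.2.2.2, zadd p.1 (zmul (-1, 1) p.2.2.2), zadd p.2.1 (zmul (-1, 1) p.2.2.2),
    zadd p.2.2.1 (zmul (-1, 1) p.2.2.2))

lemma evl_step (p : V4) : evl (step p) = Rot (evl p) := by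
  have h := phi
  funext i
  fin_cases i
  · simp [evl, step, Rot, bas, ev_add, ev_sub, ev_mul]
    simp [ev]
    have : ω^8 = -1 + (τ - 1) * (ω^2 + ω^4 + ω^6) := by rw [tau_w]; grind
    linear_combination -(d * (p.2.2.2.1 + p.2.2.2.2 * τ)) * this
  · simp [evl, step, Rot, bas, ev_add, ev_sub, ev_mul]
    simp [ev]
    have : ω^88 = -1 + (τ - 1) * (ω^22 + ω^44 + ω^66) := by rw [tau_w]; grind
    linear_combination (a * (p.2.2.2.1 + p.2.2.2.2 * τ)) * this

/-- coordinates of the four orbit representatives -/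
def cA : V4 := ((0, 1), (0, 1), (-1, 1), (-1, 0))
def cB : V4 := ((1, 0), (1, 0), (1, 0), (1, -1))
def cC0 : V4 := ((1, 0), (1, 0), (0, 0), (0, 0))
def cD : V4 := ((1, 0), (0, 0), (0, 0), (0, 0))

lemma evl_D : evl cD = D 0 := by
  funext i
  fin_cases i <;> simp [evl, cD, ev, bas, D]

lemma evl_C : evl cC0 = C 0 := by
  have h := phi
  funext i
  fin_cases i
  · simp [evl, cC0, ev, bas, C]
    rw [c_eq]
    linear_combination d * w30
  · simp [evl, cC0, ev, bas, C]
    rw [b_eq]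
    linear_combination (-a) * w30

lemma evl_B : evl cB = B 0 := by
  have h := phi
  funext i
  fin_cases i
  · simp [evl, cB, ev, bas, B]
    rw [b_eq, a_eq]
    have : 1 + ω^2 + ω^4 + (1 - τ) * ω^6
      = (τ + τ * ω^2 + (τ - 1) * ω^4 - ω^6) * (ω^11 - ω^19) * ω := by rw [tau_w]; grind
    linear_combination d * this
  · simp [evl, cB, ev, bas, B]
    rw [c_eq, a_eq]
    have : - ((τ + τ * ω^2 + (τ - 1) * ω^4 - ω^6) * (1 + ω^22 + ω^44 + (1 - τ) * ω^66))
      = (ω - ω^29) * ω^11 := by rw [tau_w]; grind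
    linear_combination d * this

lemma evl_A : evl cA = A 0 := by
  have h := phi
  funext i
  fin_cases i
  · simp [evl, cA, ev, bas, A]
    rw [a_eq]
    ring
  · simp [evl, cA, ev, bas, A]
    rw [a_eq]
    have : - ((τ + τ * ω^2 + (τ - 1) * ω^4 - ω^6) * (τ + τ * ω^22 + (τ - 1) * ω^44 - ω^66))
      = 1 := by rw [tau_w]; grind
    linear_combination d * this

lemma rinner_def (v w) : rinner v w = (v 0 * star (w 0)).re + (v 1 * star (w 1)).re := by
  simp [rinner, Fin.sum_univ_two]

lemma rinner_comm (v w) : rinner v w = rinner w v := by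
  simp [rinner_def]; ring

lemma rinner_add (u v w) : rinner (u + v) w = rinner u w + rinner v w := by
  simp [rinner_def]; ring

lemma rinner_smul (r : ℝ) (v w) : rinner (r • v) w = r * rinner v w := by
  simp [rinner_def]; ring

lemma rinner_add' (u v w) : rinner w (u + v) = rinner w u + rinner w v := by
  simp [rinner_def]; ring

lemma rinner_smul' (r : ℝ) (v w) : rinner w (r • v) = r * rinner w v := by
  simp [rinner_def]; ring

lemma rinner_rot (v w) : rinner (Rot v) (Rot w) = rinner v w := by
  have h2 : ω^2 * star (ω^2) = 1 := by
    rw [w_star _ (by norm_num)]; linear_combination (ω^30 - 1) * w30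
  have h22 : ω^22 * star (ω^22) = 1 := by
    rw [w_star _ (by norm_num)]; linear_combination (ω^30 - 1) * w30
  have e1 : Rot v 0 * star (Rot w 0) = v 0 * star (w 0) := by
    have : Rot v 0 * star (Rot w 0) = (ω^2 * v 0) * (star (ω^2) * star (w 0)) := by
      rw [← star_mul']; rfl
    rw [this]; linear_combination (v 0 * star (w 0)) * h2
  have e2 : Rot v 1 * star (Rot w 1) = v 1 * star (w 1) := by
    have : Rot v 1 * star (Rot w 1) = (ω^22 * v 1) * (star (ω^22) * star (w 1)) := by
      rw [← star_mul']; rfl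
    rw [this]; linear_combination (v 1 * star (w 1)) * h22
  rw [rinner_def, rinner_def, e1, e2]

lemma bas_succ (n : ℕ) : bas (n + 1) = Rot (bas n) := by
  funext i
  fin_cases i <;> simp [bas, Rot] <;> ring

lemma gram0 (n : ℕ) (hn : n ≤ 30) (hn' : 22 * n ≤ 60 * n) (g : ℝ)
    (h : (d:ℂ)^2 * (ω^(2*n) + ω^(60 - 2*n)) + (a:ℂ)^2 * (ω^(22*n) + ω^(60*n-22*n)) = g) :
    2 * rinner (bas n) (bas 0) = g := by
  have h60 : ω ^ 60 = 1 := by linear_combination (ω^30 - 1) * w30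
  have e1 := w_cos (2*n) (by omega)
  have e2 : ω^(22*n) + ω^(60*n-22*n) = ((2 * Real.cos ((22 * n : ℕ) * (π/30)) : ℝ) : ℂ) := by
    rw [← w_re, ← Complex.add_conj]
    congr 1
    have : ω^(22*n) * ω^(60*n-22*n) = 1 := by
      rw [← pow_add, Nat.add_sub_cancel' hn', pow_mul, h60, one_pow]
    have h2 : ω^(22*n) * star (ω^(22*n)) = 1 := by
      rw [Complex.star_def, Complex.mul_conj, w_pow, Complex.normSq_eq_norm_sq,
        Complex.norm_exp_ofReal_mul_I]; simp
    exact mul_left_cancel₀ (pow_ne_zero _ w_ne) (this.trans h2.symm)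
  rw [← e1, e2] at h
  have h' : d^2 * (2 * Real.cos ((2 * n : ℕ) * (π/30)))
    + a^2 * (2 * Real.cos ((22 * n : ℕ) * (π/30))) = g := by exact_mod_cast h
  rw [← h', rinner_def]
  have f1 := w_re (2*n)
  have f2 := w_re (22*n)
  rw [← f1, ← f2]
  simp [bas]
  ring

lemma g0 : rinner (bas 0) (bas 0) = 1 := by
  have := gram0 0 (by norm_num) (by norm_num) 2 (by
    rw [aC, dC]; have h60 : ω ^ 60 = 1 := by linear_combination (ω^30 - 1) * w30
    norm_num [h60])
  linarith
lemma g1 : rinner (bas 1) (bas 0) = -1/2 := by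
  have := gram0 1 (by norm_num) (by norm_num) (-1) (by
    rw [aC, dC, sg_w, tau_w]; have := phi
    norm_num; grind)
  linarith
lemma g2 : rinner (bas 2) (bas 0) = 0 := by
  have := gram0 2 (by norm_num) (by norm_num) 0 (by
    rw [aC, dC, sg_w, tau_w]; have := phi
    norm_num; grind)
  linarith
lemma g3 : rinner (bas 3) (bas 0) = τ / 2 := by
  have := gram0 3 (by norm_num) (by norm_num) τ (by
    rw [aC, dC, sg_w, tau_w]; have := phi
    norm_num; grind)
  linarith

lemma gs (m n : ℕ) : rinner (bas (m+1)) (bas (n+1)) = rinner (bas m) (bas n) := by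
  rw [bas_succ, bas_succ, rinner_rot]

/-- twice the inner product in coordinates -/
def inn (p q : V4) : Z2 :=
  zadd (zadd (zmul p.1 (zadd (zsub (zadd q.1 q.1) q.2.1) (zmul (0,1) q.2.2.2)))
    (zmul p.2.1 (zsub (zsub (zadd q.2.1 q.2.1) q.1) q.2.2.1)))
   (zadd (zmul p.2.2.1 (zsub (zsub (zadd q.2.2.1 q.2.2.1) q.2.1) q.2.2.2))
    (zmul p.2.2.2 (zadd (zsub (zadd q.2.2.2 q.2.2.2) q.2.2.1) (zmul (0,1) q.1))))

lemma ev_inn (p q : V4) : ev (inn p q) = 2 * rinner (evl p) (evl q) := by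
  have e : ev (0, 1) = τ := by simp [ev]
  have c1 := rinner_comm (bas 0) (bas 1)
  have c2 := rinner_comm (bas 0) (bas 2)
  have c3 := rinner_comm (bas 0) (bas 3)
  have h11 := gs 0 0
  have h12 := gs 0 1
  have h13 := gs 0 2
  have h21 := gs 1 0
  have h22 := gs 1 1
  have h23 := gs 1 2
  have h31 := gs 2 0
  have h32 := gs 2 1
  have h33 := gs 2 2
  norm_num at h11 h12 h13 h21 h22 h23 h31 h32 h33
  simp only [inn, evl, ev_add, ev_sub, ev_mul, e, rinner_add, rinner_add', rinner_smul,
    rinner_smul', h33, h32, h31, h23, h22, h21, h13, h12, h11, c1, c2, c3, g0, g1, g2, g3]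
  ring

def rfl4 (p q : V4) : V4 :=
  let t := inn q p
  (zsub q.1 (zmul t p.1), zsub q.2.1 (zmul t p.2.1), zsub q.2.2.1 (zmul t p.2.2.1),
    zsub q.2.2.2 (zmul t p.2.2.2))

lemma evl_rfl (p q : V4) :
    evl (rfl4 p q) = evl q - (2 * rinner (evl q) (evl p)) • evl p := by
  rw [← ev_inn]
  simp only [evl, rfl4, ev_sub, ev_mul]
  module

def orb : ℕ → V4 → List V4
  | 0, _ => []
  | n + 1, p => p :: orb n (step p)

def reps : List V4 := [cA, cB, cC0, cD]
def roots : List V4 := orb 30 cA ++ orb 30 cB ++ orb 30 cC0 ++ orb 30 cD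

lemma closed : ∀ p ∈ reps, ∀ q ∈ roots, rfl4 p q ∈ roots := by decide +kernel
lemma closed_step : ∀ q ∈ roots, step q ∈ roots := by decide +kernel
lemma reps_roots : ∀ q ∈ reps, q ∈ roots := by decide +kernel
lemma step_surj : ∀ q ∈ roots, ∃ r ∈ roots, step r = q := by decide +kernel

lemma rot_iter (n : ℕ) (v) : Rot^[n] v = ![ω^(2*n) * v 0, ω^(22*n) * v 1] := by
  induction n with
  | zero => funext i; fin_cases i <;> simp
  | succ n ih =>
    rw [Function.iterate_succ_apply', ih]
    funext i; fin_cases i <;> simp [Rot] <;> ring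

lemma evl_iter (n : ℕ) (p) : evl (step^[n] p) = Rot^[n] (evl p) := by
  induction n with
  | zero => rfl
  | succ n ih => rw [Function.iterate_succ_apply', Function.iterate_succ_apply', evl_step, ih]

lemma A_rot (n : Fin 30) : A n = Rot^[n] (A 0) := by
  rw [rot_iter]; funext i; fin_cases i <;> simp [A] <;> ring
lemma B_rot (n : Fin 30) : B n = Rot^[n] (B 0) := by
  rw [rot_iter]; funext i; fin_cases i <;> simp [B] <;> ring
lemma C_rot (n : Fin 30) : C n = Rot^[n] (C 0) := by
  rw [rot_iter]; funext i; fin_cases i <;> simp [C] <;> ring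
lemma D_rot (n : Fin 30) : D n = Rot^[n] (D 0) := by
  rw [rot_iter]; funext i; fin_cases i <;> simp [D] <;> ring

lemma T_form (v) (hv : v ∈ T) : ∃ n : ℕ, ∃ p ∈ reps, v = evl (step^[n] p) := by
  obtain ⟨n, h | h | h | h⟩ := hv
  · exact ⟨n, cA, by simp [reps], by rw [h, A_rot, evl_iter, evl_A]⟩
  · exact ⟨n, cB, by simp [reps], by rw [h, B_rot, evl_iter, evl_B]⟩
  · exact ⟨n, cC0, by simp [reps], by rw [h, C_rot, evl_iter, evl_C]⟩
  · exact ⟨n, cD, by simp [reps], by rw [h, D_rot, evl_iter, evl_D]⟩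

lemma iter_roots (n : ℕ) (p) (hp : p ∈ reps) : step^[n] p ∈ roots := by
  induction n with
  | zero => exact reps_roots p hp
  | succ n ih => rw [Function.iterate_succ_apply']; exact closed_step _ ih

lemma mem_orb (N : ℕ) (p q) (h : q ∈ orb N p) : ∃ n < N, q = step^[n] p := by
  induction N generalizing p with
  | zero => simp [orb] at h
  | succ N ih =>
    rw [orb, List.mem_cons] at h
    rcases h with h | h
    · exact ⟨0, by omega, h⟩
    · obtain ⟨n, hn, e⟩ := ih _ h
      exact ⟨n + 1, by omega, e⟩

lemma roots_T (q) (hq : q ∈ roots) : evl q ∈ T := by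
  simp only [roots, List.mem_append] at hq
  rcases hq with ((h | h) | h) | h <;> obtain ⟨n, hn, rfl⟩ := mem_orb _ _ _ h <;>
    refine ⟨⟨n, hn⟩, ?_⟩
  · left; rw [A_rot, evl_iter, evl_A]
  · right; left; rw [B_rot, evl_iter, evl_B]
  · right; right; left; rw [C_rot, evl_iter, evl_C]
  · right; right; right; rw [D_rot, evl_iter, evl_D]

lemma rot_lin (r : ℝ) (v w) : Rot (w - r • v) = Rot w - r • Rot v := by
  funext i; fin_cases i <;> simp [Rot] <;> ring

lemma main (n : ℕ) (p) (hp : p ∈ reps) (q) (hq : q ∈ roots) :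
    ∃ r ∈ roots, evl q - (2 * rinner (evl q) (evl (step^[n] p))) • evl (step^[n] p) = evl r := by
  induction n generalizing q with
  | zero => exact ⟨_, closed p hp q hq, (evl_rfl p q).symm⟩
  | succ n ih =>
    obtain ⟨q', hq', rfl⟩ := step_surj q hq
    obtain ⟨r, hr, e⟩ := ih q' hq'
    refine ⟨step r, closed_step r hr, ?_⟩
    rw [Function.iterate_succ_apply', evl_step, evl_step, evl_step, rinner_rot, ← rot_lin, e]

/-- T is closed under reflections in its elements. -/
theorem stmt18 : ∀ v ∈ T, ∀ w ∈ T, w - (2 * rinner w v) • v ∈ T := by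
  intro v hv w hw
  obtain ⟨n, p, hp, rfl⟩ := T_form v hv
  obtain ⟨m, q, hq, rfl⟩ := T_form w hw
  obtain ⟨r, hr, e⟩ := main n p hp _ (iter_roots m q hq)
  rw [e]
  exact roots_T r hr

end Triacontagonal
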